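/- Let T be the bounded linear operator on ℓ² acting on each consecutive pair of coordinates by (T x)_{2k} = x_{2k} − x_{2k+1} and (T x)_{2k+1} = x_{2k} + x_{2k+1}, and let U be the unitary operator on ℓ² defined by (U x)_{2k} = (x_{2k} + x_{2k+1})/√2 and (U x)_{2k+1} = (x_{2k} − x_{2k+1})/√2. Then T is a P-operator relative to the orthonormal basis {U e_n}, i.e., for every x ∈ ℓ², if ⟨x, U e_n⟩·⟨T x, U e_n⟩ ≤ 0 for all n, then x = 0; moreover T∘U ≠ U∘T. -/

import Mathlib

local notation "⟪" x ", " y "⟫" => @inner ℝ _ _ x y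

/-!
On each pair of coordinates `T` is the identity plus a skew-symmetric map, so `⟪T x, x⟫ = ‖x‖ ^ 2`.
By Parseval, `⟪T x, x⟫` is the sum of the products `⟪x, f n⟫ * ⟪T x, f n⟫` for *any* orthonormal
basis `f`, and these products cannot all be nonpositive unless `x = 0`. The operators fail to
commute because `T ∘ U` and `U ∘ T` read the coordinate `2 * k` of their value off different
coordinates of the argument.
-/

open scoped ENNReal lp

section POperator

variable {ι E : Type*} [NormedAddCommGroup E] [InnerProductSpace ℝ E]

/-- `T` is a P-operator relative to the orthonormal basis `b`: only the zero vector has, in every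
coordinate with respect to `b`, a nonpositive product with its image. Orthonormal bases are encoded
as Hilbert bases. -/
def IsPOperator (b : HilbertBasis ι ℝ E) (T : E →L[ℝ] E) : Prop :=
  ∀ x, (∀ n, ⟪x, b n⟫ * ⟪T x, b n⟫ ≤ 0) → x = 0

theorem isPOperator_of_inner_map_self_pos (b : HilbertBasis ι ℝ E) {T : E →L[ℝ] E}
    (hT : ∀ x ≠ 0, 0 < ⟪T x, x⟫) : IsPOperator b T := by
  intro x hx
  by_contra hx0
  have parseval : HasSum (fun n => ⟪x, b n⟫ * ⟪T x, b n⟫) ⟪T x, x⟫ := by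
    simpa only [real_inner_comm] using b.hasSum_inner_mul_inner x (T x)
  exact (hT x hx0).not_ge (parseval.nonpos hx)

end POperator

section UnitaryBasis

variable {ι 𝕜 : Type*} [RCLike 𝕜]

/-- The orthonormal basis `{U e_n}` of `ℓ²` obtained by applying a unitary operator `U` to the
standard basis, encoded by its coordinate isometry `U⁻¹`. -/
noncomputable def unitaryHilbertBasis
    (U : unitary (ℓ²(ι, 𝕜) →L[𝕜] ℓ²(ι, 𝕜))) : HilbertBasis ι 𝕜 ℓ²(ι, 𝕜) :=
  .ofRepr (Unitary.linearIsometryEquiv U).symm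

theorem unitaryHilbertBasis_apply [DecidableEq ι]
    (U : unitary (ℓ²(ι, 𝕜) →L[𝕜] ℓ²(ι, 𝕜))) (n : ι) :
    unitaryHilbertBasis U n = (U : ℓ²(ι, 𝕜) →L[𝕜] ℓ²(ι, 𝕜)) (lp.single 2 n (1 : 𝕜)) := by
  rw [← HilbertBasis.repr_symm_single]
  rfl

end UnitaryBasis

theorem tsum_eq_tsum_even_add_odd {M : Type*} [AddCommGroup M] [UniformSpace M]
    [IsUniformAddGroup M] [CompleteSpace M] [T2Space M] {f : ℕ → M} (hf : Summable f) :
    ∑' n, f n = ∑' k, (f (2 * k) + f (2 * k + 1)) := by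
  have double_injective : Function.Injective (2 * · : ℕ → ℕ) := mul_right_injective₀ two_ne_zero
  have summable_even : Summable fun k => f (2 * k) := hf.comp_injective double_injective
  have summable_odd : Summable fun k => f (2 * k + 1) :=
    hf.comp_injective ((add_left_injective 1).comp double_injective)
  rw [← tsum_even_add_odd summable_even summable_odd, summable_even.tsum_add summable_odd]

section QuadraticForm

variable {F : Type*} [NormedAddCommGroup F] [InnerProductSpace ℝ F]
  {T : ℓ²(ℕ, F) →L[ℝ] ℓ²(ℕ, F)}

theorem inner_pairwise_rotation_self
    (hT_even : ∀ x k, T x (2 * k) = x (2 * k) - x (2 * k + 1))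
    (hT_odd : ∀ x k, T x (2 * k + 1) = x (2 * k) + x (2 * k + 1)) (x : ℓ²(ℕ, F)) :
    ⟪T x, x⟫ = ‖x‖ ^ 2 := by
  rw [← real_inner_self_eq_norm_sq, lp.inner_eq_tsum, lp.inner_eq_tsum,
    tsum_eq_tsum_even_add_odd (lp.summable_inner (𝕜 := ℝ) (T x) x),
    tsum_eq_tsum_even_add_odd (lp.summable_inner (𝕜 := ℝ) x x)]
  refine tsum_congr fun k => ?_
  simp only [hT_even, hT_odd, inner_sub_left, inner_add_left]
  rw [real_inner_comm (x (2 * k)) (x (2 * k + 1))]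
  ring

theorem isPOperator_pairwise_rotation {ι : Type*} (b : HilbertBasis ι ℝ ℓ²(ℕ, F))
    (hT_even : ∀ x k, T x (2 * k) = x (2 * k) - x (2 * k + 1))
    (hT_odd : ∀ x k, T x (2 * k + 1) = x (2 * k) + x (2 * k + 1)) : IsPOperator b T :=
  isPOperator_of_inner_map_self_pos b fun x hx => by
    rw [inner_pairwise_rotation_self hT_even hT_odd]
    positivity

end QuadraticForm

section Commutator

variable {p : ℝ≥0∞} [Fact (1 ≤ p)] {T U : ℓ^p(ℕ, ℝ) →L[ℝ] ℓ^p(ℕ, ℝ)}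

theorem pairwise_rotation_hadamard_apply_even
    (hT_even : ∀ x k, T x (2 * k) = x (2 * k) - x (2 * k + 1))
    (hU_even : ∀ x k, U x (2 * k) = (x (2 * k) + x (2 * k + 1)) / √2)
    (hU_odd : ∀ x k, U x (2 * k + 1) = (x (2 * k) - x (2 * k + 1)) / √2)
    (x : ℓ^p(ℕ, ℝ)) (k : ℕ) : T (U x) (2 * k) = 2 / √2 * x (2 * k + 1) := by
  rw [hT_even, hU_even, hU_odd]
  ring

theorem hadamard_pairwise_rotation_apply_even
    (hT_even : ∀ x k, T x (2 * k) = x (2 * k) - x (2 * k + 1))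
    (hT_odd : ∀ x k, T x (2 * k + 1) = x (2 * k) + x (2 * k + 1))
    (hU_even : ∀ x k, U x (2 * k) = (x (2 * k) + x (2 * k + 1)) / √2)
    (x : ℓ^p(ℕ, ℝ)) (k : ℕ) : U (T x) (2 * k) = 2 / √2 * x (2 * k) := by
  rw [hU_even, hT_even, hT_odd]
  ring

theorem pairwise_rotation_comp_hadamard_ne
    (hT_even : ∀ x k, T x (2 * k) = x (2 * k) - x (2 * k + 1))
    (hT_odd : ∀ x k, T x (2 * k + 1) = x (2 * k) + x (2 * k + 1))
    (hU_even : ∀ x k, U x (2 * k) = (x (2 * k) + x (2 * k + 1)) / √2)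
    (hU_odd : ∀ x k, U x (2 * k + 1) = (x (2 * k) - x (2 * k + 1)) / √2) :
    T ∘L U ≠ U ∘L T := by
  intro hcomm
  let e₀ : ℓ^p(ℕ, ℝ) := lp.single p 0 1
  have values_eq : U (T e₀) (2 * 0) = T (U e₀) (2 * 0) :=
    congrArg (fun x : ℓ^p(ℕ, ℝ) => x (2 * 0)) (DFunLike.congr_fun hcomm.symm e₀)
  rw [pairwise_rotation_hadamard_apply_even hT_even hU_even hU_odd,
    hadamard_pairwise_rotation_apply_even hT_even hT_odd hU_even] at values_eq
  simp [e₀] at values_eq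

end Commutator

/-- The operator `T` on `ℓ²` acting pairwise by `(Tx)_{2k} = x_{2k} - x_{2k+1}`,
`(Tx)_{2k+1} = x_{2k} + x_{2k+1}` is a P-operator relative to the orthonormal basis
`{U e_n}`, where `U` is the Hadamard rotation on each consecutive pair of coordinates and
`{e_n}` is the standard orthonormal basis; moreover `T` and `U` do not commute. -/
theorem pairwise_rotation_pOperator_rotated_basis_and_not_commute
    (T U : lp (fun _ : ℕ => ℝ) 2 →L[ℝ] lp (fun _ : ℕ => ℝ) 2)
    (hT0 : ∀ (x : lp (fun _ : ℕ => ℝ) 2) (k : ℕ),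
      T x (2 * k) = x (2 * k) - x (2 * k + 1))
    (hT1 : ∀ (x : lp (fun _ : ℕ => ℝ) 2) (k : ℕ),
      T x (2 * k + 1) = x (2 * k) + x (2 * k + 1))
    (hUunitary : U ∈ unitary (lp (fun _ : ℕ => ℝ) 2 →L[ℝ] lp (fun _ : ℕ => ℝ) 2))
    (hU0 : ∀ (x : lp (fun _ : ℕ => ℝ) 2) (k : ℕ),
      U x (2 * k) = (x (2 * k) + x (2 * k + 1)) / Real.sqrt 2)
    (hU1 : ∀ (x : lp (fun _ : ℕ => ℝ) 2) (k : ℕ),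
      U x (2 * k + 1) = (x (2 * k) - x (2 * k + 1)) / Real.sqrt 2) :
    (∀ x : lp (fun _ : ℕ => ℝ) 2,
      (∀ n : ℕ, ⟪x, U (lp.single 2 n (1 : ℝ))⟫ * ⟪T x, U (lp.single 2 n (1 : ℝ))⟫ ≤ 0) →
      x = 0) ∧ T ∘L U ≠ U ∘L T := by
  refine ⟨fun x hx => ?_, pairwise_rotation_comp_hadamard_ne hT0 hT1 hU0 hU1⟩
  refine isPOperator_pairwise_rotation (unitaryHilbertBasis ⟨U, hUunitary⟩) hT0 hT1 x fun n => ?_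
  rw [unitaryHilbertBasis_apply]
  exact hx n
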